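/- For all positive integers m and n, the set 𝔅(m,n) is a null set for the Haar measure μ on ℒ^{mn}: μ(𝔅(m,n)) = 0. -/

import Mathlib

/-!
Common setup: the field `ℒ = 𝔽((X⁻¹))` of formal Laurent series with coefficients
in a finite field `𝔽` of `k` elements.  We realize `ℒ` as `LaurentSeries 𝔽`
(Hahn series over `ℤ`) in the variable `T = X⁻¹`, so that `X` corresponds to `T⁻¹`
and the polynomial ring `𝔽[X]` corresponds to series supported on nonpositive
exponents.  The absolute value of `x = Σ_{i ≤ N} a_i X^i` (with `a_N ≠ 0`) is
`k^N`, i.e. `k^(-order x)` in terms of the `T`-adic order.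
-/

open scoped Classical ENNReal NNReal
open MeasureTheory

noncomputable section

namespace FSBad

/-- The field `ℒ = 𝔽((X⁻¹))`. -/
abbrev L (𝔽 : Type) [Field 𝔽] : Type := LaurentSeries 𝔽

variable {𝔽 : Type} [Field 𝔽] [Fintype 𝔽]

/-- The absolute value `‖·‖` on `ℒ`: `‖x‖ = k^(deg_X x)`, `‖0‖ = 0`. -/
def lnorm (x : L 𝔽) : ℝ := if x = 0 then 0 else (Fintype.card 𝔽 : ℝ) ^ (-x.order)

/-- Membership in the polynomial ring `𝔽[X] ⊆ ℒ` (polynomials in `X = T⁻¹`). -/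
def IsPoly (x : L 𝔽) : Prop := ∀ i : ℤ, 0 < i → x.coeff i = 0

/-- The height (sup-norm) `‖·‖_∞` on `ℒ^ι`. -/
def vnorm {ι : Type*} (x : ι → L 𝔽) : ℝ := ⨆ i, lnorm (x i)

/-- The closed ball in `ℒ^ι` with centre `c` and radius `ρ`. -/
def vball {ι : Type*} (c : ι → L 𝔽) (ρ : ℝ) : Set (ι → L 𝔽) :=
  {x | vnorm (fun i => x i - c i) ≤ ρ}

/-- `m × n` matrices over `ℒ`, identified with `ℒ^(mn)`. -/
abbrev Mat (𝔽 : Type) [Field 𝔽] (m n : ℕ) : Type := Matrix (Fin m) (Fin n) (L 𝔽)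

/-- The height of a matrix, i.e. the sup-norm on `ℒ^(mn)`. -/
def mnorm {m n : ℕ} (A : Mat 𝔽 m n) : ℝ := ⨆ p : Fin m × Fin n, lnorm (A p.1 p.2)

/-- The closed ball in `ℒ^(mn)` with centre `c` and radius `ρ`. -/
def mball {m n : ℕ} (c : Mat 𝔽 m n) (ρ : ℝ) : Set (Mat 𝔽 m n) :=
  {A | mnorm (A - c) ≤ ρ}

/-- The distance `⟨x⟩` from `x ∈ ℒ^h` to the polynomial lattice `𝔽[X]^h`. -/
def latDist {h : ℕ} (x : Fin h → L 𝔽) : ℝ :=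
  sInf {r : ℝ | ∃ p : Fin h → L 𝔽, (∀ i, IsPoly (p i)) ∧ r = vnorm (fun i => x i - p i)}

/-- The set `𝔅(m,n)` of badly approximable systems of `m` linear forms in `n`
variables over `ℒ`. -/
def Bad (𝔽 : Type) [Field 𝔽] [Fintype 𝔽] (m n : ℕ) : Set (Mat 𝔽 m n) :=
  {A | ∃ K : ℝ, 0 < K ∧ ∀ q : Fin m → L 𝔽, (∀ i, IsPoly (q i)) → q ≠ 0 →
    latDist (Matrix.vecMul q A) ^ n > K / vnorm q ^ m}

/-- The Hausdorff `s`-measure of `E ⊆ ℒ^(mn)`, defined through countable covers by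
balls of radii `< δ`, letting `δ → 0` (the infimum over `δ`-covers is nonincreasing
in `δ`, so the limit is the supremum over `δ > 0`). -/
def hMeasure {m n : ℕ} (s : ℝ) (E : Set (Mat 𝔽 m n)) : ℝ≥0∞ :=
  ⨆ (δ : ℝ) (_ : 0 < δ),
    ⨅ (c : ℕ → Mat 𝔽 m n) (ρ : ℕ → ℝ) (_ : ∀ i, 0 < ρ i ∧ ρ i < δ)
      (_ : E ⊆ ⋃ i, mball (c i) (ρ i)), ∑' i, ENNReal.ofReal (ρ i ^ s)

/-- The Hausdorff dimension of `E ⊆ ℒ^(mn)`. -/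
def hdim {m n : ℕ} (E : Set (Mat 𝔽 m n)) : ℝ :=
  sInf {s : ℝ | 0 ≤ s ∧ hMeasure s E = 0}

/-! ### Schmidt `(α,β)`-games on `ℒ^(mn)` -/

/-- A formal ball: an element of `Ω = ℒ^(mn) × ℝ`. -/
structure FBall (𝔽 : Type) [Field 𝔽] (m n : ℕ) where
  /-- centre -/
  c : Mat 𝔽 m n
  /-- radius -/
  r : ℝ

/-- Formal inclusion of formal balls: `(c₁,ρ₁) ⊆ (c₂,ρ₂)` iff `ρ₁ + ‖c₁ - c₂‖_∞ ≤ ρ₂`. -/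
def FBall.ssub {m n : ℕ} (B₁ B₂ : FBall 𝔽 m n) : Prop :=
  B₁.r + mnorm (B₁.c - B₂.c) ≤ B₂.r

/-- The subset of `ℒ^(mn)` determined by a formal ball. -/
def FBall.toSet {m n : ℕ} (B : FBall 𝔽 m n) : Set (Mat 𝔽 m n) := mball B.c B.r

/-- A strategy for White: given the balls `B₁, …, B_{i+1}` chosen by Black so far,
produce White's next ball. -/
abbrev Strategy (𝔽 : Type) [Field 𝔽] (m n : ℕ) : Type :=
  (i : ℕ) → (Fin (i + 1) → FBall 𝔽 m n) → FBall 𝔽 m n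

/-- White's move at stage `i` when following strategy `str` against Black's balls `B`. -/
def wMove {m n : ℕ} (str : Strategy 𝔽 m n) (B : ℕ → FBall 𝔽 m n) (i : ℕ) : FBall 𝔽 m n :=
  str i fun j => B j.1

/-- Black's move `B_{j+2}` is legal (for parameter `β`): it is a formal subset of
White's ball `W_{j+1}` and has radius `β · ρ(W_{j+1})`. -/
def BlackOk {m n : ℕ} (β : ℝ) (str : Strategy 𝔽 m n) (B : ℕ → FBall 𝔽 m n) (j : ℕ) : Prop :=
  (B (j + 1)).ssub (wMove str B j) ∧ (B (j + 1)).r = β * (wMove str B j).r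

/-- White's move `W_{i+1}` is legal (for parameter `α`): it is a formal subset of
Black's ball `B_{i+1}` and has radius `α · ρ(B_{i+1})`. -/
def WhiteOk {m n : ℕ} (α : ℝ) (str : Strategy 𝔽 m n) (B : ℕ → FBall 𝔽 m n) (i : ℕ) : Prop :=
  (wMove str B i).ssub (B i) ∧ (wMove str B i).r = α * (B i).r

/-- `str` is a winning strategy for White in the `(α,β;S)`-game: against any
sequence of Black balls, White's moves are legal as long as Black has played
legally so far, and if the whole play is legal then the intersection of the
chosen balls is contained in `S`. -/
def WinningStrategy {m n : ℕ} (α β : ℝ) (S : Set (Mat 𝔽 m n)) (str : Strategy 𝔽 m n) : Prop :=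
  ∀ B : ℕ → FBall 𝔽 m n, 0 ≤ (B 0).r →
    (∀ i, (∀ j < i, BlackOk β str B j) → WhiteOk α str B i) ∧
    ((∀ j, BlackOk β str B j) → (⋂ i, (B i).toSet) ⊆ S)

/-- `S` is `(α,β)`-winning. -/
def IsWinningAB {m n : ℕ} (α β : ℝ) (S : Set (Mat 𝔽 m n)) : Prop :=
  ∃ str : Strategy 𝔽 m n, WinningStrategy α β S str

/-- `S` is `α`-winning. -/
def IsWinningA {m n : ℕ} (α : ℝ) (S : Set (Mat 𝔽 m n)) : Prop :=
  ∀ β : ℝ, 0 < β → β < 1 → IsWinningAB α β S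

/-- The winning dimension of `S` (a supremum of a set of reals, which is `0` by
convention when the set is empty). -/
def windim {m n : ℕ} (S : Set (Mat 𝔽 m n)) : ℝ :=
  sSup {α : ℝ | 0 < α ∧ α < 1 ∧ IsWinningA α S}

/-! ### The matrices `Ā`, `Ā^*` and the quantities `M_v`, `D_v`, `∇D_v` -/

/-- `Ā = [[A, I_m], [I_n, 0]]`. Rows are indexed by `Fin m ⊕ Fin n`
(coordinates `q_1, …, q_{m+n}`), columns by `Fin n ⊕ Fin m`. -/
def Abar {m n : ℕ} (A : Mat 𝔽 m n) : Matrix (Fin m ⊕ Fin n) (Fin n ⊕ Fin m) (L 𝔽) :=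
  Matrix.fromBlocks A 1 1 0

/-- `Ā^* = [[Aᵀ, I_n], [I_m, 0]]`. Rows are indexed by `Fin n ⊕ Fin m`,
columns by `Fin m ⊕ Fin n`. -/
def AbarStar {m n : ℕ} (A : Mat 𝔽 m n) : Matrix (Fin n ⊕ Fin m) (Fin m ⊕ Fin n) (L 𝔽) :=
  Matrix.fromBlocks A.transpose 1 1 0

/-- The standard bilinear form `x·y = Σ_i x_i y_i` on `ℒ^ι`. -/
def dotL {ι : Type*} [Fintype ι] (x y : ι → L 𝔽) : L 𝔽 := ∑ i, x i * y i

/-- Strictly increasing `v`-tuples `1 ≤ i_1 < ⋯ < i_v ≤ m`. -/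
def IncTuple (v m : ℕ) : Type := {f : Fin v → Fin m // StrictMono f}

/-- The vector `M_v(A) ∈ ℒ^(C(m,v)²)` of the determinants
`det (y_{i_r} · C_{j_s}(Ā^*))_{1 ≤ r,s ≤ v}` over all strictly increasing index
tuples.  (For `v = 0` every coordinate is an empty determinant, i.e. `1`.) -/
def MvVec {m n : ℕ} (y : Fin m → (Fin n ⊕ Fin m → L 𝔽)) (v : ℕ) (A : Mat 𝔽 m n) :
    IncTuple v m × IncTuple v m → L 𝔽 := fun p =>
  Matrix.det (Matrix.of fun r s : Fin v =>
    dotL (y (p.1.1 r)) fun t => AbarStar A t (Sum.inl (p.2.1 s)))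

/-- `‖M_v(A)‖_∞`. -/
def MvNorm {m n : ℕ} (y : Fin m → (Fin n ⊕ Fin m → L 𝔽)) (v : ℕ) (A : Mat 𝔽 m n) : ℝ :=
  vnorm (MvVec y v A)

/-- `M_v(K) = max_{A ∈ K} ‖M_v(A)‖_∞` for `K ⊆ ℒ^(mn)`. -/
def MvSet {m n : ℕ} (y : Fin m → (Fin n ⊕ Fin m → L 𝔽)) (v : ℕ) (K : Set (Mat 𝔽 m n)) : ℝ :=
  sSup {r : ℝ | ∃ A ∈ K, r = MvNorm y v A}

/-- `D_v(A) = det (y_h · C_l(Ā^*))_{1 ≤ h,l ≤ v}`. -/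
def Dv {m n : ℕ} (y : Fin m → (Fin n ⊕ Fin m → L 𝔽)) (v : ℕ) (hv : v ≤ m)
    (A : Mat 𝔽 m n) : L 𝔽 :=
  Matrix.det (Matrix.of fun h l : Fin v =>
    dotL (y (Fin.castLE hv h)) fun t => AbarStar A t (Sum.inl (Fin.castLE hv l)))

/-- The discrete gradient `∇D_v(A) ∈ ℒ^(mn)`, with coordinates
`D_v(A + E_{ij}) - D_v(A)`. -/
def gradDv {m n : ℕ} (y : Fin m → (Fin n ⊕ Fin m → L 𝔽)) (v : ℕ) (hv : v ≤ m)
    (A : Mat 𝔽 m n) : Fin m × Fin n → L 𝔽 := fun p =>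
  Dv y v hv (A + Matrix.single p.1 p.2 1) - Dv y v hv A

/-- `y_1, …, y_m ∈ ℒ^(m+n)` form an orthonormal system: `y_h · y_{h'} = δ_{h h'}`
and `‖t_1 y_1 + ⋯ + t_m y_m‖_∞ = max_h ‖t_h‖`. -/
def OrthoSystem {m n : ℕ} (y : Fin m → (Fin n ⊕ Fin m → L 𝔽)) : Prop :=
  (∀ h h', dotL (y h) (y h') = if h = h' then 1 else 0) ∧
  (∀ t : Fin m → L 𝔽, vnorm (fun r => ∑ h, t h * y h r) = ⨆ h, lnorm (t h))

/-! ### Distance functions, parallelepipeds and successive minima -/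

/-- The `j`-th successive minimum of a distance function `F` on `ℒ^N`: the infimum
of all `λ > 0` such that `{F < λ}` contains `j` linearly independent points of
`𝔽[X]^N`. -/
def succMin {N : ℕ} (F : (Fin N → L 𝔽) → ℝ) (j : ℕ) : ℝ :=
  sInf {lam : ℝ | 0 < lam ∧ ∃ v : Fin j → (Fin N → L 𝔽),
    (∀ r, ∀ i, IsPoly (v r i)) ∧ LinearIndependent (L 𝔽) v ∧ ∀ r, F (v r) < lam}

/-- The distance function `F_A(x) = max_j c_j⁻¹ ‖Σ_i x_i a_{ij}‖`. -/
def FA {N : ℕ} (A : Matrix (Fin N) (Fin N) (L 𝔽)) (c : Fin N → ℝ)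
    (x : Fin N → L 𝔽) : ℝ :=
  ⨆ j, (c j)⁻¹ * lnorm (∑ i, x i * A i j)

/-- The parallelepiped `P_A(λ) = {x ∈ ℒ^N : F_A(x) < λ}`. -/
def PA {N : ℕ} (A : Matrix (Fin N) (Fin N) (L 𝔽)) (c : Fin N → ℝ) (lam : ℝ) :
    Set (Fin N → L 𝔽) := {x | FA A c x < lam}

/-- The polar distance function `F_A^*(y) = sup_{x ≠ 0} ‖x·y‖ / F_A(x)`. -/
def FAstar {N : ℕ} (A : Matrix (Fin N) (Fin N) (L 𝔽)) (c : Fin N → ℝ)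
    (y : Fin N → L 𝔽) : ℝ :=
  ⨆ x : {x : Fin N → L 𝔽 // x ≠ 0}, lnorm (dotL x.1 y) / FA A c x.1

/-! ### Haar measure, characterized by translation invariance and normalization -/

/-- The Borel σ-algebra on `ℒ^N`, generated by the balls. -/
def vecSigma (𝔽 : Type) [Field 𝔽] [Fintype 𝔽] (N : ℕ) : MeasurableSpace (Fin N → L 𝔽) :=
  MeasurableSpace.generateFrom {s | ∃ c ρ, (0 : ℝ) < ρ ∧ s = vball c ρ}

/-- `μ` is the Haar measure on `ℒ^N`: translation invariant and normalized so that
the unit ball `I^N` has measure `1` (these properties determine it uniquely). -/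
def IsHaarVec {N : ℕ} (μ : @Measure (Fin N → L 𝔽) (vecSigma 𝔽 N)) : Prop :=
  (∀ (v : Fin N → L 𝔽) (s : Set (Fin N → L 𝔽)), μ ((fun x => x + v) ⁻¹' s) = μ s) ∧
  μ {x | ∀ i, lnorm (x i) < 1} = 1

/-- The Borel σ-algebra on `ℒ^(mn)`, generated by the balls. -/
def matSigma (𝔽 : Type) [Field 𝔽] [Fintype 𝔽] (m n : ℕ) : MeasurableSpace (Mat 𝔽 m n) :=
  MeasurableSpace.generateFrom {s | ∃ c ρ, (0 : ℝ) < ρ ∧ s = mball c ρ}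

/-- `μ` is the Haar measure on `ℒ^(mn)`: translation invariant and normalized so
that the unit ball `I^(mn)` has measure `1`. -/
def IsHaarMat {m n : ℕ} (μ : @Measure (Mat 𝔽 m n) (matSigma 𝔽 m n)) : Prop :=
  (∀ (v : Mat 𝔽 m n) (s : Set (Mat 𝔽 m n)), μ ((fun x => x + v) ⁻¹' s) = μ s) ∧
  μ {A | ∀ i j, lnorm (A i j) < 1} = 1

/-! ### The constants of Section 3 -/

/-- `τ = m/(m+n)`. -/
def tau (m n : ℕ) : ℝ := m / (m + n)

/-- `δ = R^(-m(m+n)²)`. -/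
def del (R : ℝ) (m n : ℕ) : ℝ := R ^ (-((m : ℝ) * ((m : ℝ) + n) ^ 2))

/-- `δ* = R^(-n(m+n)²)`. -/
def delStar (R : ℝ) (m n : ℕ) : ℝ := R ^ (-((n : ℝ) * ((m : ℝ) + n) ^ 2))

/-!
For fixed `e`, let `BadWith e` be the set of matrices that are badly approximable with constant
`k⁻ᵉ`. These countably many sets cover `𝔅(m,n)`, and each of them is porous. Indeed, for
`A ∈ BadWith e` and `u : ℕ`, Dirichlet's theorem provides `q ≠ 0` of degree at most `n u` such that
`qA` is within `k^(-m u - 1)` of a polynomial vector, and bad approximability forces the degree of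
`q` to be at least `n u - e`. Dividing the error by the leading coordinate of `q`, one makes `qA`
polynomial by moving `A` a distance at most `k^(-((m + n) u + 1 - e))`. The same `q` then excludes a
whole ball around the new point, whose radius is smaller only by a factor depending on `e`, `m` and
`n`. So every ball meeting `BadWith e` loses a fixed proportion of its subballs at the next scale,
and iterating this leaves measure zero.
-/

open scoped Pointwise Matrix

section Porosity

variable {G : Type*} [AddGroup G]

/-- Porosity of `E` along a sequence of subgroups `H 0 ≥ H 1 ≥ ⋯`: every coset of `H j` through
a point of `E` contains a coset of `H (j + 1)` that misses `E`. The cosets of the `H j` play the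
role of the balls in the usual metric notion. -/
def IsPorousAlong (H : ℕ → AddSubgroup G) (E : Set G) : Prop :=
  ∀ j, ∀ x ∈ E, ∃ y ∈ x +ᵥ (H j : Set G), Disjoint E (y +ᵥ (H (j + 1) : Set G))

variable {H K : AddSubgroup G}

lemma vadd_coe_eq_of_mem {x y : G} (h : y ∈ x +ᵥ (H : Set G)) :
    y +ᵥ (H : Set G) = x +ᵥ (H : Set G) :=
  ((leftAddCoset_eq_iff H).2 ((mem_leftAddCoset_iff x).1 h)).symm

lemma mem_vadd_out_iff (hKH : K ≤ H) {x g : G} (q : H ⧸ K.addSubgroupOf H) :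
    g ∈ (x + (q.out : G)) +ᵥ (K : Set G) ↔
      ∃ hg : -x + g ∈ H, QuotientAddGroup.mk ⟨-x + g, hg⟩ = q := by
  have hmk : ∀ hg : -x + g ∈ H,
      (QuotientAddGroup.mk ⟨-x + g, hg⟩ = q ↔ -(q.out : G) + (-x + g) ∈ K) := fun hg => by
    rw [eq_comm, ← q.out_eq', QuotientAddGroup.eq, AddSubgroup.mem_addSubgroupOf]
    simp
  have hH : -(q.out : G) + (-x + g) ∈ K → -x + g ∈ H := fun h =>
    (H.add_mem_cancel_left (H.neg_mem q.out.2)).1 (hKH h)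
  rw [mem_leftAddCoset_iff, neg_add_rev, add_assoc]
  exact ⟨fun h => ⟨hH h, (hmk _).2 h⟩, fun ⟨hg, h⟩ => (hmk hg).1 h⟩

lemma vadd_coe_eq_iUnion (hKH : K ≤ H) (x : G) :
    x +ᵥ (H : Set G) = ⋃ q : H ⧸ K.addSubgroupOf H, (x + (q.out : G)) +ᵥ (K : Set G) := by
  ext g
  simp [mem_vadd_out_iff hKH, mem_leftAddCoset_iff]

lemma pairwise_disjoint_vadd_out (hKH : K ≤ H) (x : G) :
    Pairwise (Function.onFun Disjoint fun q : H ⧸ K.addSubgroupOf H =>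
      (x + (q.out : G)) +ᵥ (K : Set G)) := by
  refine fun q q' hqq' => Set.disjoint_left.2 fun g hg hg' => hqq' ?_
  obtain ⟨_, rfl⟩ := (mem_vadd_out_iff hKH q).1 hg
  exact ((mem_vadd_out_iff hKH q').1 hg').2

lemma countable_quotient_of_forall_exists_mem {ι : Type*} [Countable ι] (U : ι → AddSubgroup G)
    (hU : ∀ x, ∃ i, x ∈ U i) [∀ i, H.IsFiniteRelIndex (U i)] : Countable (G ⧸ H) := by
  have hcover : ⋃ i, (QuotientAddGroup.mk '' (U i : Set G) : Set (G ⧸ H)) = Set.univ := by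
    refine Set.eq_univ_of_forall fun q => ?_
    obtain ⟨x, rfl⟩ := QuotientAddGroup.mk_surjective q
    obtain ⟨i, hi⟩ := hU x
    exact Set.mem_iUnion.2 ⟨i, x, hi, rfl⟩
  rw [← Set.countable_univ_iff, ← hcover]
  refine Set.countable_iUnion fun i => Set.Finite.countable ?_
  refine (Set.finite_range fun q : U i ⧸ H.addSubgroupOf (U i) =>
    (QuotientAddGroup.mk (q.out : G) : G ⧸ H)).subset ?_
  rintro _ ⟨x, hx, rfl⟩
  have hout := QuotientAddGroup.out_eq'
    (QuotientAddGroup.mk (⟨x, hx⟩ : U i) : U i ⧸ H.addSubgroupOf (U i))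
  exact ⟨_, QuotientAddGroup.eq.2 (AddSubgroup.mem_addSubgroupOf.1 (QuotientAddGroup.eq.1 hout))⟩

variable [MeasurableSpace G] {μ : Measure G} [VAddInvariantMeasure G G μ]

lemma measure_eq_relIndex_mul (hKH : K ≤ H) [K.IsFiniteRelIndex H]
    (hK : ∀ x : G, MeasurableSet (x +ᵥ (K : Set G))) :
    μ H = K.relIndex H * μ K := by
  have hunion := vadd_coe_eq_iUnion hKH 0
  rw [zero_vadd] at hunion
  rw [hunion, measure_iUnion (pairwise_disjoint_vadd_out hKH 0) fun _ => hK _]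
  simp only [measure_vadd, ENNReal.tsum_const, AddSubgroup.relIndex, AddSubgroup.index]
  rw [ENat.card_eq_coe_natCard, ENat.toENNReal_coe]

lemma measure_inter_vadd_le (hKH : K ≤ H) [K.IsFiniteRelIndex H]
    (hK : ∀ x : G, MeasurableSet (x +ᵥ (K : Set G))) {E : Set G} {c : ℝ≥0∞}
    (hc : ∀ y : G, μ (E ∩ (y +ᵥ (K : Set G))) ≤ c * μ K) {x y : G}
    (hy : y ∈ x +ᵥ (H : Set G)) (hE : Disjoint E (y +ᵥ (K : Set G))) :
    μ (E ∩ (x +ᵥ (H : Set G))) ≤ (1 - (K.relIndex H : ℝ≥0∞)⁻¹) * c * μ H := by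
  have := Fintype.ofFinite (H ⧸ K.addSubgroupOf H)
  set d := K.relIndex H with hd
  have hd0 : d ≠ 0 := AddSubgroup.relIndex_ne_zero
  rw [vadd_coe_eq_iUnion hKH] at hy ⊢
  obtain ⟨q₀, hq₀⟩ := Set.mem_iUnion.1 hy
  rw [vadd_coe_eq_of_mem hq₀] at hE
  have hcover : E ∩ ⋃ q : H ⧸ K.addSubgroupOf H, (x + (q.out : G)) +ᵥ (K : Set G) ⊆
      ⋃ q ∈ Finset.univ.erase q₀, E ∩ ((x + (q.out : G)) +ᵥ (K : Set G)) := by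
    rintro g ⟨hgE, hg⟩
    obtain ⟨q, hq⟩ := Set.mem_iUnion.1 hg
    have hne : q ≠ q₀ := fun h => Set.disjoint_left.1 hE hgE (h ▸ hq)
    simp only [Set.mem_iUnion]
    exact ⟨q, by simpa using hne, hgE, hq⟩
  calc μ (E ∩ ⋃ q : H ⧸ K.addSubgroupOf H, (x + (q.out : G)) +ᵥ (K : Set G))
      ≤ ∑ q ∈ Finset.univ.erase q₀, μ (E ∩ ((x + (q.out : G)) +ᵥ (K : Set G))) :=
        (measure_mono hcover).trans (measure_biUnion_finset_le _ _)
    _ ≤ (d - 1 : ℕ) * (c * μ K) := by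
        refine (Finset.sum_le_card_nsmul _ _ _ fun q _ => hc _).trans_eq ?_
        rw [Finset.card_erase_of_mem (Finset.mem_univ _), Finset.card_univ, nsmul_eq_mul,
          ← Nat.card_eq_fintype_card]
        rfl
    _ = (1 - (d : ℝ≥0∞)⁻¹) * d * (c * μ K) := by
        rw [ENNReal.sub_mul (by simp), one_mul,
          ENNReal.inv_mul_cancel (Nat.cast_ne_zero.2 hd0) (ENNReal.natCast_ne_top d)]
        norm_cast
    _ = (1 - (d : ℝ≥0∞)⁻¹) * c * μ H := by
        rw [measure_eq_relIndex_mul hKH hK, ← hd]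
        ring

variable {H : ℕ → AddSubgroup G} {E : Set G}

lemma IsPorousAlong.measure_inter_vadd_le_pow (hE : IsPorousAlong H E) (hH : Antitone H)
    (hmeas : ∀ j (x : G), MeasurableSet (x +ᵥ (H j : Set G)))
    [∀ j, (H (j + 1)).IsFiniteRelIndex (H j)] {N : ℕ}
    (hN : ∀ j, (H (j + 1)).relIndex (H j) ≤ N) (i j : ℕ) (x : G) :
    μ (E ∩ (x +ᵥ (H j : Set G))) ≤ (1 - (N : ℝ≥0∞)⁻¹) ^ i * μ (H j) := by
  induction i generalizing j x with
  | zero => exact (measure_mono Set.inter_subset_right).trans (by simp)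
  | succ i ih =>
    rcases (E ∩ (x +ᵥ (H j : Set G))).eq_empty_or_nonempty with hempty | ⟨z, hzE, hz⟩
    · simp [hempty]
    obtain ⟨y, hy, hyE⟩ := hE j z hzE
    rw [vadd_coe_eq_of_mem hz] at hy
    calc μ (E ∩ (x +ᵥ (H j : Set G)))
        ≤ (1 - ((H (j + 1)).relIndex (H j) : ℝ≥0∞)⁻¹) * (1 - (N : ℝ≥0∞)⁻¹) ^ i * μ (H j) :=
          measure_inter_vadd_le (hH j.le_succ) (hmeas _) (ih (j + 1)) hy hyE
      _ ≤ (1 - (N : ℝ≥0∞)⁻¹) ^ (i + 1) * μ (H j) := by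
          rw [pow_succ']
          gcongr
          exact hN j

theorem IsPorousAlong.measure_eq_zero (hE : IsPorousAlong H E) (hH : Antitone H)
    (hmeas : ∀ j (x : G), MeasurableSet (x +ᵥ (H j : Set G)))
    [∀ j, (H (j + 1)).IsFiniteRelIndex (H j)] {N : ℕ}
    (hN : ∀ j, (H (j + 1)).relIndex (H j) ≤ N) [Countable (G ⧸ H 0)] (hfin : μ (H 0) ≠ ∞) :
    μ E = 0 := by
  have hr : (1 - (N : ℝ≥0∞)⁻¹) < 1 :=
    ENNReal.sub_lt_self ENNReal.one_ne_top one_ne_zero (ENNReal.inv_ne_zero.2 (by simp))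
  have hcoset : ∀ x : G, μ (E ∩ (x +ᵥ (H 0 : Set G))) = 0 := fun x => by
    have hlim := ENNReal.Tendsto.mul_const (ENNReal.tendsto_pow_atTop_nhds_zero_of_lt_one hr)
      (Or.inr hfin)
    rw [zero_mul] at hlim
    exact le_antisymm
      (ge_of_tendsto' hlim fun i => hE.measure_inter_vadd_le_pow hH hmeas hN i 0 x) bot_le
  refine measure_mono_null (fun g hg => ?_)
    (measure_iUnion_null fun q : G ⧸ H 0 => hcoset q.out)
  exact Set.mem_iUnion.2 ⟨QuotientAddGroup.mk g, hg,
    (mem_leftAddCoset_iff _).2 (QuotientAddGroup.eq.1 (QuotientAddGroup.out_eq' _))⟩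

end Porosity

section OrderGE

/-- The Hahn series with no terms of exponent below `t`. For `ℒ` this is the ball
`{x | ‖x‖ ≤ k⁻ᵗ}`, since the exponent counts powers of `X⁻¹`. -/
def orderGE {Γ R : Type*} [PartialOrder Γ] [AddGroup R] (t : Γ) :
    AddSubgroup (HahnSeries Γ R) where
  carrier := {x | ∀ l < t, x.coeff l = 0}
  zero_mem' _ _ := rfl
  add_mem' hx hy l hl := by simp [hx l hl, hy l hl]
  neg_mem' hx l hl := by simp [hx l hl]

section LinearOrder

variable {Γ R : Type*} [LinearOrder Γ]

lemma mem_orderGE_iff_le_orderTop [AddGroup R] {t : Γ} {x : HahnSeries Γ R} :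
    x ∈ orderGE t ↔ (t : WithTop Γ) ≤ x.orderTop :=
  (HahnSeries.le_orderTop_iff_forall.trans (by simp [orderGE])).symm

lemma orderGE_antitone [AddGroup R] :
    Antitone (orderGE : Γ → AddSubgroup (HahnSeries Γ R)) :=
  fun _ _ hst _ hx l hl => hx l (hl.trans_le hst)

lemma mem_orderGE_iff_le_order [AddGroup R] [Zero Γ] {t : Γ} {x : HahnSeries Γ R} (hx : x ≠ 0) :
    x ∈ orderGE t ↔ t ≤ x.order :=
  (HahnSeries.le_order_iff_forall hx).symm

lemma mem_orderGE_order [AddGroup R] [Zero Γ] (x : HahnSeries Γ R) : x ∈ orderGE x.order :=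
  fun _ => HahnSeries.coeff_eq_zero_of_lt_order

lemma exists_forall_mem_orderGE_order [AddGroup R] [Zero Γ] {ι : Type*} [Finite ι]
    {q : ι → HahnSeries Γ R} (hq : q ≠ 0) :
    ∃ i, q i ≠ 0 ∧ ∀ j, q j ∈ orderGE (q i).order := by
  have hne : {i | q i ≠ 0}.Nonempty := Function.ne_iff.1 hq
  obtain ⟨i, hi, hmin⟩ := Set.exists_min_image _ (fun i => (q i).order) (Set.toFinite _) hne
  refine ⟨i, hi, fun j => ?_⟩
  rcases eq_or_ne (q j) 0 with hj | hj
  · rw [hj]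
    exact zero_mem _
  · exact (mem_orderGE_iff_le_order hj).2 (hmin j hj)

variable [AddCommGroup Γ] [IsOrderedAddMonoid Γ]

lemma mul_mem_orderGE [Ring R] {s t : Γ} {x y : HahnSeries Γ R} (hx : x ∈ orderGE s)
    (hy : y ∈ orderGE t) : x * y ∈ orderGE (s + t) := by
  rw [mem_orderGE_iff_le_orderTop] at *
  exact (add_le_add hx hy).trans HahnSeries.orderTop_add_le_mul

lemma div_mem_orderGE [Field R] {t : Γ} {x y : HahnSeries Γ R} (hx : x ∈ orderGE t) (hy : y ≠ 0) :
    x / y ∈ orderGE (t - y.order) := by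
  rcases eq_or_ne x 0 with rfl | hx0
  · simp [zero_mem]
  rw [mem_orderGE_iff_le_order hx0] at hx
  rw [mem_orderGE_iff_le_order (div_ne_zero hx0 hy), sub_le_iff_le_add,
    ← HahnSeries.order_mul (div_ne_zero hx0 hy) hy, div_mul_cancel₀ _ hy]
  exact hx

lemma vecMul_mem_orderGE [Ring R] {ι κ : Type*} [Fintype ι] {s t : Γ} {q : ι → HahnSeries Γ R}
    {A : Matrix ι κ (HahnSeries Γ R)} (hq : ∀ i, q i ∈ orderGE s) (hA : A ∈ (orderGE t).matrix)
    (j : κ) : (q ᵥ* A) j ∈ orderGE (s + t) :=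
  sum_mem fun i _ => mul_mem_orderGE (hq i) (hA i j)

lemma exists_mem_orderGE_vecMul_eq [Field R] {ι κ : Type*} [Fintype ι] {t : Γ}
    {q : ι → HahnSeries Γ R} {i : ι} (hi : q i ≠ 0) {r : κ → HahnSeries Γ R}
    (hr : ∀ j, r j ∈ orderGE t) :
    ∃ D ∈ (orderGE (t - (q i).order)).matrix, q ᵥ* D = r := by
  refine ⟨Matrix.of (Pi.single i fun j => r j / q i), fun i' j => ?_, ?_⟩
  · rcases eq_or_ne i' i with rfl | hne
    · simpa using div_mem_orderGE (hr j) hi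
    · simp [hne, zero_mem]
  · ext1 j
    rw [Matrix.vecMul, dotProduct, Finset.sum_eq_single i]
    · simp [mul_div_cancel₀ _ hi]
    · intro i' _ hne
      simp [hne]
    · simp

end LinearOrder

section Coefficients

variable {F : Type*} [Field F]

/-- The block of `s` coefficients of a Laurent series starting at exponent `t`. -/
def coeffsFrom (t : ℤ) (s : ℕ) : LaurentSeries F →ₗ[F] (Fin s → F) :=
  LinearMap.pi fun l => HahnSeries.coeff.linearMap (t + l)

lemma mem_orderGE_add_iff {t : ℤ} {s : ℕ} {x : LaurentSeries F} :
    x ∈ orderGE (t + s) ↔ x ∈ orderGE t ∧ coeffsFrom t s x = 0 := by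
  refine ⟨fun h => ⟨orderGE_antitone (by lia) h, funext fun l => h _ (by omega)⟩,
    fun ⟨ht, hs⟩ l hl => ?_⟩
  rcases lt_or_ge l t with hlt | hle
  · exact ht l hlt
  · have hl' : t + (l - t).toNat = l := by lia
    rw [← hl']
    exact congrFun hs ⟨(l - t).toNat, by lia⟩

lemma matrix_orderGE_add {ι κ : Type*} (t : ℤ) (s : ℕ) :
    ((orderGE (t + s)).matrix : AddSubgroup (Matrix ι κ (LaurentSeries F))) =
      (orderGE t).matrix ⊓ (coeffsFrom (F := F) t s).toAddMonoidHom.mapMatrix.ker := by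
  ext A
  simp only [AddSubgroup.mem_inf, AddMonoidHom.mem_ker]
  refine ⟨fun h => ⟨fun i j => (mem_orderGE_add_iff.1 (h i j)).1, ?_⟩, fun h i j => ?_⟩
  · ext1 i j
    exact (mem_orderGE_add_iff.1 (h i j)).2
  · exact mem_orderGE_add_iff.2 ⟨h.1 i j, congrFun (congrFun h.2 i) j⟩

variable [Finite F] {ι κ : Type*} [Finite ι] [Finite κ]

instance isFiniteRelIndex_matrix_orderGE (t : ℤ) (s : ℕ) :
    ((orderGE (t + s)).matrix : AddSubgroup (Matrix ι κ (LaurentSeries F))).IsFiniteRelIndex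
      (orderGE t).matrix where
  relIndex_ne_zero := by
    rw [matrix_orderGE_add, AddSubgroup.inf_relIndex_left, AddSubgroup.relIndex_ker]
    have : Finite (Matrix ι κ (Fin s → F)) := Pi.finite
    exact Nat.card_pos.ne'

lemma relIndex_matrix_orderGE_le (t : ℤ) (s : ℕ) :
    ((orderGE (t + s)).matrix : AddSubgroup (Matrix ι κ (LaurentSeries F))).relIndex
      (orderGE t).matrix ≤ Nat.card (Matrix ι κ (Fin s → F)) := by
  have : Finite (Matrix ι κ (Fin s → F)) := Pi.finite
  rw [matrix_orderGE_add, AddSubgroup.inf_relIndex_left, AddSubgroup.relIndex_ker]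
  exact Nat.card_le_card_of_injective _ Subtype.val_injective

end Coefficients

end OrderGE

section Diophantine

variable {F : Type} [Field F] {m n : ℕ}

lemma exists_isPoly_sub_mem_orderGE {s : ℕ} {x : L F} (hx : coeffsFrom 1 s x = 0) :
    ∃ p : L F, IsPoly p ∧ x - p ∈ orderGE (1 + s : ℤ) := by
  refine ⟨HahnSeries.truncLT 1 x, fun l hl => HahnSeries.coeff_truncLT_of_le (by lia : 1 ≤ l) x,
    mem_orderGE_add_iff.2 ⟨fun l hl => ?_, funext fun l => ?_⟩⟩
  · simp [HahnSeries.coeff_truncLT_of_lt hl]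
  · have htrunc : (HahnSeries.truncLT 1 x).coeff (1 + l) = 0 :=
      HahnSeries.coeff_truncLT_of_le (by lia) x
    simpa [htrunc, coeffsFrom] using congrFun hx l

/-- The polynomial `∑ w_l X^l` with prescribed coefficients, as an element of `ℒ`. -/
def polyOfCoeffs (N : ℕ) : (Fin N → F) →ₗ[F] L F :=
  ∑ l : Fin N, HahnSeries.single.linearMap (-(l : ℤ)) ∘ₗ LinearMap.proj l

lemma coeff_polyOfCoeffs {N : ℕ} (w : Fin N → F) (i : ℤ) :
    (polyOfCoeffs N w).coeff i = ∑ l : Fin N, if i = -(l : ℤ) then w l else 0 := by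
  rw [polyOfCoeffs, LinearMap.sum_apply, HahnSeries.coeff_sum]
  refine Finset.sum_congr rfl fun l _ => ?_
  split_ifs with h <;> simp [h]

lemma coeff_polyOfCoeffs_neg {N : ℕ} (w : Fin N → F) (l : Fin N) :
    (polyOfCoeffs N w).coeff (-l) = w l := by
  simp [coeff_polyOfCoeffs, Fin.val_inj]

lemma polyOfCoeffs_injective (N : ℕ) : Function.Injective (polyOfCoeffs (F := F) N) :=
  fun w w' h => funext fun l => by rw [← coeff_polyOfCoeffs_neg w, h, coeff_polyOfCoeffs_neg]

lemma isPoly_polyOfCoeffs {N : ℕ} (w : Fin N → F) : IsPoly (polyOfCoeffs N w) := fun i hi => by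
  rw [coeff_polyOfCoeffs]
  exact Finset.sum_eq_zero fun l _ => if_neg (by lia)

lemma polyOfCoeffs_mem_orderGE {N : ℕ} (w : Fin (N + 1) → F) :
    polyOfCoeffs (N + 1) w ∈ orderGE (-N : ℤ) := fun i hi => by
  rw [coeff_polyOfCoeffs]
  exact Finset.sum_eq_zero fun l _ => if_neg (by omega)

-- `IsScalarTower.right` does not cover Laurent series: instance search finds their algebra
-- structure through power series, and that scalar action is not reducibly the coefficientwise one.
instance isScalarTower_hahnSeries {Γ R : Type*} [PartialOrder Γ] [AddCommMonoid Γ]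
    [IsOrderedCancelAddMonoid Γ] [CommSemiring R] :
    IsScalarTower R (HahnSeries Γ R) (HahnSeries Γ R) where
  smul_assoc r x y := by
    simp only [smul_eq_mul, ← HahnSeries.single_zero_mul_eq_smul, mul_assoc]

/-- Dirichlet's theorem, by counting dimensions: the first `d` digits of the fractional parts of
`qA` are `n * d` linear forms in the `m * (N + 1)` coefficients of `q`. -/
theorem exists_isPoly_vecMul_sub_mem_orderGE (A : Mat F m n) {N d : ℕ}
    (h : n * d < m * (N + 1)) :
    ∃ q : Fin m → L F, (∀ i, IsPoly (q i)) ∧ q ≠ 0 ∧ (∀ i, q i ∈ orderGE (-N : ℤ)) ∧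
      ∃ p : Fin n → L F, (∀ j, IsPoly (p j)) ∧
        ∀ j, (q ᵥ* A) j - p j ∈ orderGE (1 + d : ℤ) := by
  let digits : (Fin m → Fin (N + 1) → F) →ₗ[F] (Fin n → Fin d → F) :=
    (coeffsFrom 1 d).compLeft (Fin n) ∘ₗ A.vecMulLinear.restrictScalars F ∘ₗ
      (polyOfCoeffs (N + 1)).compLeft (Fin m)
  have hker : LinearMap.ker digits ≠ ⊥ :=
    LinearMap.ker_ne_bot_of_finrank_lt (by simpa [Module.finrank_pi_fintype] using h)
  obtain ⟨w, hw, hw0⟩ := Submodule.exists_mem_ne_zero_of_ne_bot hker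
  refine ⟨fun i => polyOfCoeffs (N + 1) (w i), fun i => isPoly_polyOfCoeffs _, fun hq => hw0 ?_,
    fun i => polyOfCoeffs_mem_orderGE _, ?_⟩
  · exact funext fun i => polyOfCoeffs_injective _ ((congrFun hq i).trans (map_zero _).symm)
  · choose p hp hp' using fun j =>
      exists_isPoly_sub_mem_orderGE (congrFun (LinearMap.mem_ker.1 hw) j)
    exact ⟨p, hp, hp'⟩

/-- The ball `{A | ‖A‖_∞ ≤ k⁻ᵗ}`, as a subgroup of `ℒ^(mn)`. -/
abbrev matBall (F : Type) [Field F] (m n : ℕ) (t : ℤ) : AddSubgroup (Mat F m n) :=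
  (orderGE t).matrix

lemma matBall_antitone : Antitone (matBall F m n) := fun _ _ hst _ hA i j =>
  orderGE_antitone hst (hA i j)

/-- The matrices with `‖q‖_∞^m ⟨qA⟩ⁿ > k⁻ᵉ` for all `q`, in terms of exponents: `‖q‖_∞ ≤ kᵃ`
and `‖qA - p‖_∞ ≤ k⁻ᵇ` force `n b < e + m a`. -/
def BadWith (F : Type) [Field F] (m n e : ℕ) : Set (Mat F m n) :=
  {A | ∀ q : Fin m → L F, (∀ i, IsPoly (q i)) → q ≠ 0 → ∀ p : Fin n → L F, (∀ j, IsPoly (p j)) →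
    ∀ a b : ℤ, (∀ i, q i ∈ orderGE (-a)) → (∀ j, (q ᵥ* A) j - p j ∈ orderGE b) →
      n * b < e + m * a}

lemma disjoint_badWith_vadd {e : ℕ} {A : Mat F m n} {q : Fin m → L F} (hq : ∀ i, IsPoly (q i))
    (hq0 : q ≠ 0) (hqA : ∀ j, IsPoly ((q ᵥ* A) j)) {a c : ℤ} (ha : ∀ i, q i ∈ orderGE (-a))
    (hac : e + m * a ≤ n * (c - a)) :
    Disjoint (BadWith F m n e) (A +ᵥ (matBall F m n c : Set (Mat F m n))) := by
  rw [Set.disjoint_right]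
  rintro _ ⟨D, hD, rfl⟩ hbad
  refine hac.not_gt (hbad q hq hq0 (q ᵥ* A) hqA a (c - a) ha fun j => ?_)
  simpa [Matrix.vecMul_add, sub_eq_neg_add] using vecMul_mem_orderGE ha hD j

lemma exists_nat_mul_mem_Icc {N : ℕ} (hN : 0 < N) (T : ℕ) :
    ∃ u : ℕ, N * u ∈ Set.Icc T (T + N) :=
  ⟨T / N + 1, (Nat.lt_mul_div_succ T hN).le, by
    rw [mul_add, mul_one]; exact Nat.add_le_add_right (Nat.mul_div_le T N) N⟩

lemma exists_disjoint_badWith_vadd (hm : 0 < m) (hn : 0 < n) {e : ℕ} {A : Mat F m n}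
    (hA : A ∈ BadWith F m n e) {t : ℤ} (ht : 0 ≤ t) :
    ∃ A' ∈ A +ᵥ (matBall F m n t : Set (Mat F m n)), Disjoint (BadWith F m n e)
      (A' +ᵥ (matBall F m n (t + (2 * e + m + n : ℕ)) : Set (Mat F m n))) := by
  lift t to ℕ using ht
  obtain ⟨u, hu, hu'⟩ := exists_nat_mul_mem_Icc (Nat.add_pos_left hm n) (t + e)
  obtain ⟨q, hq, hq0, hqu, p, hp, hqA⟩ :=
    exists_isPoly_vecMul_sub_mem_orderGE A (N := n * u) (d := m * u) (by nlinarith)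
  obtain ⟨i, hi, hqi⟩ := exists_forall_mem_orderGE_order hq0
  obtain ⟨a, ha⟩ : ∃ a : ℤ, (q i).order = -a := ⟨_, (neg_neg _).symm⟩
  obtain ⟨D, hD, hqD⟩ := exists_mem_orderGE_vecMul_eq hi hqA
  rw [ha] at hqi hD
  have ha_le : a ≤ n * u := by
    have := (mem_orderGE_iff_le_order hi).1 (hqu i)
    push_cast at this
    lia
  have le_ha : n * u - e ≤ a := by
    have := hA q hq hq0 p hp a _ hqi hqA
    push_cast at this
    nlinarith
  have hqAD : q ᵥ* (A - D) = p := by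
    rw [Matrix.vecMul_sub, hqD]
    exact sub_sub_cancel _ _
  refine ⟨A - D, ?_, disjoint_badWith_vadd hq hq0 (fun j => hqAD ▸ hp j) hqi ?_⟩
  · have hDt : D ∈ matBall F m n t :=
      matBall_antitone (by push_cast; zify at hu; linarith) hD
    exact ⟨-D, neg_mem hDt, (sub_eq_add_neg A D).symm⟩
  · have hdeg : ((m : ℤ) + n) * a ≤ (m + n) * (n * u) := by gcongr
    have hscale : (n : ℤ) * ((m + n) * u) ≤ n * (t + e + (m + n)) := by gcongr; exact_mod_cast hu'
    push_cast
    nlinarith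

lemma isPorousAlong_badWith (hm : 0 < m) (hn : 0 < n) (e : ℕ) :
    IsPorousAlong (fun j : ℕ => matBall F m n (1 + j * (2 * e + m + n : ℕ)))
      (BadWith F m n e) := fun j A hA => by
  obtain ⟨A', hA', hdisj⟩ := exists_disjoint_badWith_vadd hm hn hA
    (t := 1 + j * (2 * e + m + n : ℕ)) (by positivity)
  refine ⟨A', hA', ?_⟩
  rwa [add_assoc, ← add_one_mul, ← Nat.cast_add_one] at hdisj

end Diophantine

section Norms

variable {ι : Type*} {n : ℕ}

lemma one_lt_card_cast : (1 : ℝ) < Fintype.card 𝔽 := by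
  exact_mod_cast Fintype.one_lt_card

lemma lnorm_nonneg (x : L 𝔽) : 0 ≤ lnorm x := by
  unfold lnorm
  split_ifs <;> positivity

lemma lnorm_pos {x : L 𝔽} (hx : x ≠ 0) : 0 < lnorm x := by
  rw [lnorm, if_neg hx]
  positivity

lemma lnorm_le_zpow_iff {x : L 𝔽} {t : ℤ} :
    lnorm x ≤ (Fintype.card 𝔽 : ℝ) ^ (-t) ↔ x ∈ orderGE t := by
  rcases eq_or_ne x 0 with rfl | hx
  · simpa [lnorm, zero_mem] using zpow_nonneg (Nat.cast_nonneg _) _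
  · rw [lnorm, if_neg hx, zpow_le_zpow_iff_right₀ one_lt_card_cast, neg_le_neg_iff,
      mem_orderGE_iff_le_order hx]

lemma lnorm_lt_one_iff {x : L 𝔽} : lnorm x < 1 ↔ x ∈ orderGE (1 : ℤ) := by
  rcases eq_or_ne x 0 with rfl | hx
  · simp [lnorm, zero_mem]
  · rw [lnorm, if_neg hx, zpow_lt_one_iff_right₀ one_lt_card_cast, neg_lt_zero,
      mem_orderGE_iff_le_order hx, Int.lt_iff_add_one_le, zero_add]

lemma vnorm_nonneg (x : ι → L 𝔽) : 0 ≤ vnorm x :=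
  Real.iSup_nonneg fun _ => lnorm_nonneg _

lemma lnorm_le_vnorm [Finite ι] (x : ι → L 𝔽) (i : ι) : lnorm (x i) ≤ vnorm x :=
  le_ciSup (f := fun i => lnorm (x i)) (Set.finite_range _).bddAbove i

lemma vnorm_pos [Finite ι] {x : ι → L 𝔽} (hx : x ≠ 0) : 0 < vnorm x := by
  obtain ⟨i, hi⟩ := Function.ne_iff.1 hx
  exact (lnorm_pos hi).trans_le (lnorm_le_vnorm x i)

lemma vnorm_le_zpow_iff [Finite ι] {x : ι → L 𝔽} {t : ℤ} :
    vnorm x ≤ (Fintype.card 𝔽 : ℝ) ^ (-t) ↔ ∀ i, x i ∈ orderGE t :=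
  ⟨fun h i => lnorm_le_zpow_iff.1 ((lnorm_le_vnorm x i).trans h),
    fun h => Real.iSup_le (fun i => lnorm_le_zpow_iff.2 (h i)) (by positivity)⟩

lemma latDist_nonneg (x : Fin n → L 𝔽) : 0 ≤ latDist x := by
  refine Real.sInf_nonneg ?_
  rintro _ ⟨p, _, rfl⟩
  exact vnorm_nonneg _

lemma latDist_le_vnorm_sub (x : Fin n → L 𝔽) {p : Fin n → L 𝔽} (hp : ∀ i, IsPoly (p i)) :
    latDist x ≤ vnorm fun i => x i - p i := by
  refine csInf_le ⟨0, ?_⟩ ⟨p, hp, rfl⟩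
  rintro _ ⟨p, _, rfl⟩
  exact vnorm_nonneg _

end Norms

lemma bad_subset_iUnion_badWith {m n : ℕ} : Bad 𝔽 m n ⊆ ⋃ e, BadWith 𝔽 m n e := by
  rintro A ⟨K, hK, hA⟩
  set k := (Fintype.card 𝔽 : ℝ)
  have hk : 1 < k := one_lt_card_cast
  obtain ⟨e, he⟩ := exists_pow_lt_of_lt_one hK (inv_lt_one_of_one_lt₀ hk)
  refine Set.mem_iUnion.2 ⟨e, fun q hq hq0 p hp a b ha hb => ?_⟩
  have hqa : vnorm q ≤ k ^ a := by simpa using vnorm_le_zpow_iff.2 ha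
  have hdist : latDist (q ᵥ* A) ≤ k ^ (-b) :=
    (latDist_le_vnorm_sub _ hp).trans (vnorm_le_zpow_iff.2 hb)
  have hpow : k ^ (-e : ℤ) < k ^ (m * a - n * b) := calc
    k ^ (-e : ℤ) = k⁻¹ ^ e := by rw [zpow_neg, zpow_natCast, inv_pow]
    _ < K := he
    _ < latDist (q ᵥ* A) ^ n * vnorm q ^ m :=
      (div_lt_iff₀ (pow_pos (vnorm_pos hq0) m)).1 (hA q hq hq0)
    _ ≤ (k ^ (-b)) ^ n * (k ^ a) ^ m := by
      have := latDist_nonneg (q ᵥ* A)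
      have := vnorm_nonneg q
      gcongr
    _ = k ^ (m * a - n * b) := by
      rw [← zpow_natCast, ← zpow_natCast, ← zpow_mul, ← zpow_mul,
        ← zpow_add₀ (zero_lt_one.trans hk).ne']
      congr 1
      ring
  have := (zpow_lt_zpow_iff_right₀ hk).1 hpow
  lia

section HaarMeasure

variable {m n : ℕ}

lemma exists_mem_matBall {F : Type} [Field F] (A : Mat F m n) (t : ℤ) :
    ∃ N : ℕ, A ∈ matBall F m n (t - N) := by
  obtain ⟨b, hb⟩ := (Set.finite_range fun p : Fin m × Fin n => (A p.1 p.2).order).bddBelow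
  refine ⟨(t - b).toNat, fun i j => orderGE_antitone ?_ (mem_orderGE_order (A i j))⟩
  have := hb ⟨(i, j), rfl⟩
  lia

instance countable_quotient_matBall {F : Type} [Field F] [Finite F] (t : ℤ) :
    Countable (Mat F m n ⧸ matBall F m n t) := by
  have (N : ℕ) : (matBall F m n t).IsFiniteRelIndex (matBall F m n (t - N)) := by
    simpa using isFiniteRelIndex_matrix_orderGE (F := F) (ι := Fin m) (κ := Fin n) (t - N) N
  exact countable_quotient_of_forall_exists_mem (fun N : ℕ => matBall F m n (t - N))
    fun A => exists_mem_matBall A t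

lemma vadd_matBall_eq_mball (A : Mat 𝔽 m n) (t : ℤ) :
    A +ᵥ (matBall 𝔽 m n t : Set (Mat 𝔽 m n)) = mball A ((Fintype.card 𝔽 : ℝ) ^ (-t)) := by
  ext B
  rw [mem_leftAddCoset_iff, neg_add_eq_sub]
  exact Prod.forall.symm.trans
    (vnorm_le_zpow_iff (x := fun p : Fin m × Fin n => (B - A) p.1 p.2)).symm

lemma matBall_one_eq_setOf_lnorm_lt_one :
    (matBall 𝔽 m n 1 : Set (Mat 𝔽 m n)) = {A | ∀ i j, lnorm (A i j) < 1} := by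
  simp only [lnorm_lt_one_iff]
  rfl

local instance measurableSpaceMat : MeasurableSpace (Mat 𝔽 m n) := matSigma 𝔽 m n

lemma measurableSet_vadd_matBall (A : Mat 𝔽 m n) (t : ℤ) :
    MeasurableSet (A +ᵥ (matBall 𝔽 m n t : Set (Mat 𝔽 m n))) :=
  MeasurableSpace.measurableSet_generateFrom ⟨A, _, by positivity, vadd_matBall_eq_mball A t⟩

variable {μ : Measure (Mat 𝔽 m n)}

lemma IsHaarMat.vaddInvariantMeasure (hμ : IsHaarMat μ) :
    VAddInvariantMeasure (Mat 𝔽 m n) (Mat 𝔽 m n) μ where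
  measure_preimage_vadd v s _ := by
    simpa only [vadd_eq_add, add_comm v] using hμ.1 v s

lemma IsHaarMat.measure_eq_zero_of_isPorousAlong (hμ : IsHaarMat μ) {s : ℕ}
    {E : Set (Mat 𝔽 m n)} (hE : IsPorousAlong (fun j : ℕ => matBall 𝔽 m n (1 + j * s)) E) :
    μ E = 0 := by
  have := hμ.vaddInvariantMeasure
  have hstep (j : ℕ) : (1 : ℤ) + (j + 1 : ℕ) * s = 1 + j * s + s := by push_cast; ring
  have (j : ℕ) : (matBall 𝔽 m n (1 + (j + 1 : ℕ) * s)).IsFiniteRelIndex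
      (matBall 𝔽 m n (1 + j * s)) := by
    rw [hstep]
    infer_instance
  refine hE.measure_eq_zero (N := Nat.card (Matrix (Fin m) (Fin n) (Fin s → 𝔽)))
    (fun i j hij => matBall_antitone (by gcongr)) (fun j A => measurableSet_vadd_matBall A _)
    (fun j => ?_) ?_
  · rw [hstep]
    exact relIndex_matrix_orderGE_le _ _
  · rw [Nat.cast_zero, zero_mul, add_zero, matBall_one_eq_setOf_lnorm_lt_one, hμ.2]
    exact ENNReal.one_ne_top

end HaarMeasure

/-- **Theorem (Statement 13).** `𝔅(m,n)` is a null set for the Haar measure `μ` on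
`ℒ^(mn)` (normalized so that `μ(I^(mn)) = 1`). -/
theorem Bad_null (𝔽 : Type) [Field 𝔽] [Fintype 𝔽] (m n : ℕ) (hm : 0 < m) (hn : 0 < n)
    (μ : @Measure (Mat 𝔽 m n) (matSigma 𝔽 m n)) (hμ : IsHaarMat μ) :
    μ (Bad 𝔽 m n) = 0 :=
  measure_mono_null bad_subset_iUnion_badWith <| measure_iUnion_null fun e =>
    hμ.measure_eq_zero_of_isPorousAlong (isPorousAlong_badWith hm hn e)

end FSBad
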